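/- Let O be a commutative ring, G a group, n ≥ 1, and A a G-graded crossed product over O. Then A≀Sₙ, with its (G≀Sₙ)-grading given by (A≀Sₙ)_{((g₁,…,gₙ),σ)} = (A_{g₁} ⊗ … ⊗ A_{gₙ}) ⊗ Oσ, is a (G≀Sₙ)-graded crossed product; explicitly, if u_g is an invertible element of A lying in A_g for each g ∈ G, then u_{((g₁,…,gₙ),σ)} := (u_{g₁} ⊗ … ⊗ u_{gₙ}) ⊗ σ is an invertible homogeneous element of (A≀Sₙ)_{((g₁,…,gₙ),σ)}, with inverse (u_{g_{σ(1)}}⁻¹ ⊗ … ⊗ u_{g_{σ(n)}}⁻¹) ⊗ σ⁻¹. -/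

import Mathlib

open scoped TensorProduct
open PiTensorProduct MulOpposite

/-- `𝒜` is a `G`-grading of the `O`-algebra `A`. -/
def IsAlgebraGrading (O : Type*) [CommRing O] {G : Type*} [Group G] {A : Type*}
    [Ring A] [Algebra O A] (𝒜 : G → Submodule O A) : Prop :=
  (1 : A) ∈ 𝒜 1 ∧
  (∀ ⦃g h : G⦄, ∀ a ∈ 𝒜 g, ∀ b ∈ 𝒜 h, a * b ∈ 𝒜 (g * h)) ∧
  (letI := Classical.decEq G; DirectSum.IsInternal 𝒜)

/-- The componentwise grading on a tensor product of graded modules: the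
`(g₁,…,gₙ)`-component is spanned by the pure tensors of homogeneous elements. -/
def tensorGrading (O : Type*) [CommRing O] {n : ℕ} {G : Fin n → Type*}
    {M : Fin n → Type*} [∀ i, AddCommGroup (M i)] [∀ i, Module O (M i)]
    (ℳ : ∀ i, G i → Submodule O (M i)) (g : ∀ i, G i) : Submodule O (⨂[O] i, M i) :=
  Submodule.span O {x | ∃ m : ∀ i, M i, (∀ i, m i ∈ ℳ i (g i)) ∧ x = tprod O m}

/-- The permutation action of `Sₙ` on `Gⁿ`, `^σ(g₁,…,gₙ) = (g_{σ⁻¹(1)},…,g_{σ⁻¹(n)})`. -/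
def permMulAut (G : Type*) [Group G] (n : ℕ) :
    Equiv.Perm (Fin n) →* MulAut (Fin n → G) where
  toFun σ :=
    { toEquiv := Equiv.arrowCongr σ (Equiv.refl G)
      map_mul' := fun _ _ => rfl }
  map_one' := by ext g i; rfl
  map_mul' := fun σ τ => by ext g i; rfl

/-- The wreath product `G ≀ Sₙ = Gⁿ ⋊ Sₙ`. -/
abbrev WreathGroup (G : Type*) [Group G] (n : ℕ) :=
  SemidirectProduct (Fin n → G) (Equiv.Perm (Fin n)) (permMulAut G n)

/-- `(e, s)` presents the `O`-algebra `W` as the wreath product `T ≀ Sₙ` of the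
`O`-algebra `T` (typically `T = A^{⊗n}`, carrying an `Sₙ`-action `Φ`):
`e` is injective, `W = ⊕_σ e(T)·s(σ)` as an `O`-module, and
`s(σ) e(t) = e(^σ t) s(σ)`. -/
def IsWreathPresentation (O : Type*) [CommRing O] {n : ℕ} {T W : Type*}
    [Ring T] [Algebra O T] [Ring W] [Algebra O W]
    (e : T →ₐ[O] W) (s : Equiv.Perm (Fin n) →* Wˣ)
    (Φ : Equiv.Perm (Fin n) →* (T ≃ₐ[O] T)) : Prop :=
  Function.Injective e ∧
  (letI := Classical.decEq (Equiv.Perm (Fin n));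
    DirectSum.IsInternal fun σ : Equiv.Perm (Fin n) =>
      Submodule.map (LinearMap.mulRight O ((s σ : Wˣ) : W))
        (Subalgebra.toSubmodule e.range)) ∧
  ∀ (σ : Equiv.Perm (Fin n)) (t : T),
    ((s σ : Wˣ) : W) * e t = e (Φ σ t) * ((s σ : Wˣ) : W)

/-- The `((g₁,…,gₙ),σ)`-component `(A_{g₁} ⊗ … ⊗ A_{gₙ}) ⊗ Oσ` of `A ≀ Sₙ`. -/
def wreathGrading (O : Type*) [CommRing O] {G : Type*} [Group G] {n : ℕ}
    {A W : Type*} [Ring A] [Algebra O A] [Ring W] [Algebra O W]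
    (𝒜 : G → Submodule O A) (e : (⨂[O] _i : Fin n, A) →ₐ[O] W)
    (s : Equiv.Perm (Fin n) →* Wˣ) (x : WreathGroup G n) : Submodule O W :=
  Submodule.map ((LinearMap.mulRight O ((s x.right : Wˣ) : W)).comp e.toLinearMap)
    (tensorGrading O (fun _ : Fin n => 𝒜) x.left)

/-- `𝒜` is a `G`-graded crossed product structure on the `O`-algebra `A`. -/
def IsCrossedProduct (O : Type*) [CommRing O] {G : Type*} [Group G] {A : Type*}
    [Ring A] [Algebra O A] (𝒜 : G → Submodule O A) : Prop :=
  IsAlgebraGrading O 𝒜 ∧ ∀ g : G, ∃ u : Aˣ, (u : A) ∈ 𝒜 g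

section helpers

theorem internal_of_proj {O M N ι : Type*} [CommRing O] [AddCommGroup M] [Module O M]
    [AddCommGroup N] [Module O N] [DecidableEq ι] (P : ι → Submodule O M) (p : ι → M →ₗ[O] N)
    (hinj : ∀ i, ∀ x ∈ P i, p i x = 0 → x = 0)
    (hz : ∀ i j, j ≠ i → ∀ x ∈ P j, p i x = 0)
    (htop : ∀ x, x ∈ ⨆ i, P i) : DirectSum.IsInternal P := by
  rw [DirectSum.isInternal_submodule_iff_iSupIndep_and_iSup_eq_top]
  refine ⟨?_, eq_top_iff.2 fun x _ => htop x⟩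
  intro i
  rw [Submodule.disjoint_def]
  intro x hx hx'
  apply hinj i x hx
  have : (⨆ j, ⨆ (_ : j ≠ i), P j) ≤ LinearMap.ker (p i) := by
    refine iSup₂_le fun j hj y hy => ?_
    exact hz i j hj y hy
  exact this hx'

theorem exists_proj {O M ι : Type*} [CommRing O] [AddCommGroup M] [Module O M]
    [DecidableEq ι] (P : ι → Submodule O M) (h : DirectSum.IsInternal P) :
    ∃ p : ι → M →ₗ[O] M, (∀ i, ∀ x ∈ P i, p i x = x) ∧
      (∀ i j, j ≠ i → ∀ x ∈ P j, p i x = 0) := by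
  let E := LinearEquiv.ofBijective (DirectSum.coeLinearMap P) h
  have key : ∀ j, ∀ x (hx : x ∈ P j), E.symm x = DirectSum.lof O ι (fun i => P i) j ⟨x, hx⟩ := by
    intro j x hx
    rw [LinearEquiv.symm_apply_eq]
    exact (DirectSum.coeLinearMap_lof P j ⟨x, hx⟩).symm
  refine ⟨fun i => (P i).subtype ∘ₗ DirectSum.component O ι (fun i => P i) i ∘ₗ E.symm.toLinearMap,
    ?_, ?_⟩
  · intro i x hx
    simp [key i x hx, DirectSum.component.lof_self]
  · intro i j hij x hx
    simp [key j x hx, DirectSum.component.of, hij]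

theorem tensorGrading_mem_iSup {O G A : Type*} [CommRing O] [Group G] {n : ℕ} [Ring A]
    [Algebra O A] (𝒜 : G → Submodule O A) [DecidableEq G] (h : DirectSum.IsInternal 𝒜)
    (x : ⨂[O] _i : Fin n, A) :
    x ∈ ⨆ g : Fin n → G, tensorGrading O (fun _ : Fin n => 𝒜) g := by
  have htop := h.submodule_iSup_eq_top
  induction x using PiTensorProduct.induction_on with
  | add x y hx hy => exact add_mem hx hy
  | smul_tprod r m =>
    refine Submodule.smul_mem _ _ ?_
    have hm : ∀ i, ∃ f : Π₀ g, 𝒜 g, DFinsupp.lsum ℕ (fun g => (𝒜 g).subtype) f = m i := by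
      intro i
      rw [← Submodule.mem_iSup_iff_exists_dfinsupp, htop]
      trivial
    choose f hf using hm
    classical
    have hf' : m = fun i => ∑ g ∈ (f i).support, ((f i g : 𝒜 g) : A) := by
      funext i
      rw [← hf i]
      rw [DFinsupp.lsum_apply_apply, DFinsupp.sumAddHom_apply, DFinsupp.sum]
      rfl
    rw [hf', MultilinearMap.map_sum_finset]
    refine Submodule.sum_mem _ fun g _ => ?_
    refine Submodule.mem_iSup_of_mem g (Submodule.subset_span ?_)
    exact ⟨_, fun i => (f i (g i)).2, rfl⟩

theorem tensorGrading_proj {O G A : Type*} [CommRing O] [Group G] {n : ℕ} [Ring A]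
    [Algebra O A] (𝒜 : G → Submodule O A) [DecidableEq G] (h : DirectSum.IsInternal 𝒜) :
    ∃ p : (Fin n → G) → (⨂[O] _i : Fin n, A) →ₗ[O] (⨂[O] _i : Fin n, A),
      (∀ g, ∀ x ∈ tensorGrading O (fun _ : Fin n => 𝒜) g, p g x = x) ∧
      (∀ g k, k ≠ g → ∀ x ∈ tensorGrading O (fun _ : Fin n => 𝒜) k, p g x = 0) := by
  obtain ⟨p, h1, h2⟩ := exists_proj 𝒜 h
  refine ⟨fun g => PiTensorProduct.map fun i => p (g i), ?_, ?_⟩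
  · intro g x hx
    have : tensorGrading O (fun _ : Fin n => 𝒜) g ≤
        LinearMap.eqLocus (PiTensorProduct.map fun i => p (g i)) LinearMap.id := by
      refine Submodule.span_le.2 ?_
      rintro _ ⟨m, hm, rfl⟩
      simp only [SetLike.mem_coe, LinearMap.mem_eqLocus, PiTensorProduct.map_tprod, LinearMap.id_apply]
      congr 1
      funext i
      exact h1 _ _ (hm i)
    exact this hx
  · intro g k hk x hx
    have : tensorGrading O (fun _ : Fin n => 𝒜) k ≤
        LinearMap.ker (PiTensorProduct.map fun i => p (g i)) := by
      refine Submodule.span_le.2 ?_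
      rintro _ ⟨m, hm, rfl⟩
      obtain ⟨i, hi⟩ := Function.ne_iff.1 hk
      simp only [SetLike.mem_coe, LinearMap.mem_ker, PiTensorProduct.map_tprod]
      exact MultilinearMap.map_coord_zero _ i (h2 _ _ hi _ (hm i))
    exact this hx

theorem tensorGrading_mul {O G A : Type*} [CommRing O] [Group G] {n : ℕ} [Ring A]
    [Algebra O A] (𝒜 : G → Submodule O A)
    (hmul : ∀ ⦃g h : G⦄, ∀ a ∈ 𝒜 g, ∀ b ∈ 𝒜 h, a * b ∈ 𝒜 (g * h))
    (g h : Fin n → G) (x y : ⨂[O] _i : Fin n, A)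
    (hx : x ∈ tensorGrading O (fun _ : Fin n => 𝒜) g)
    (hy : y ∈ tensorGrading O (fun _ : Fin n => 𝒜) h) :
    x * y ∈ tensorGrading O (fun _ : Fin n => 𝒜) (g * h) := by
  have : tensorGrading O (fun _ : Fin n => 𝒜) g * tensorGrading O (fun _ : Fin n => 𝒜) h ≤
      tensorGrading O (fun _ : Fin n => 𝒜) (g * h) := by
    unfold tensorGrading
    rw [Submodule.span_mul_span]
    refine Submodule.span_mono ?_
    rintro _ ⟨_, ⟨a, ha, rfl⟩, _, ⟨b, hb, rfl⟩, rfl⟩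
    exact ⟨a * b, fun i => hmul _ (ha i) _ (hb i), PiTensorProduct.tprod_mul_tprod a b⟩
  exact this (Submodule.mul_mem_mul hx hy)

theorem tensorGrading_perm {O G A : Type*} [CommRing O] [Group G] {n : ℕ} [Ring A]
    [Algebra O A] (𝒜 : G → Submodule O A)
    (Φ : Equiv.Perm (Fin n) →* ((⨂[O] _i : Fin n, A) ≃ₐ[O] (⨂[O] _i : Fin n, A)))
    (hΦ : ∀ (σ : Equiv.Perm (Fin n)) (a : Fin n → A),
      Φ σ (tprod O a) = tprod O (fun i => a (σ.symm i)))
    (σ : Equiv.Perm (Fin n)) (g : Fin n → G) (x : ⨂[O] _i : Fin n, A)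
    (hx : x ∈ tensorGrading O (fun _ : Fin n => 𝒜) g) :
    Φ σ x ∈ tensorGrading O (fun _ : Fin n => 𝒜) (permMulAut G n σ g) := by
  have : tensorGrading O (fun _ : Fin n => 𝒜) g ≤
      (tensorGrading O (fun _ : Fin n => 𝒜) (permMulAut G n σ g)).comap
        (Φ σ).toLinearMap := by
    refine Submodule.span_le.2 ?_
    rintro _ ⟨m, hm, rfl⟩
    refine Submodule.subset_span ⟨fun i => m (σ.symm i), fun i => hm _, hΦ σ m⟩
  exact this hx

theorem wreath_coord {O T W : Type*} [CommRing O] {n : ℕ}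
    [Ring T] [Algebra O T] [Ring W] [Algebra O W]
    (e : T →ₐ[O] W) (s : Equiv.Perm (Fin n) →* Wˣ)
    (Φ : Equiv.Perm (Fin n) →* (T ≃ₐ[O] T)) (hW : IsWreathPresentation O e s Φ) :
    ∃ q : Equiv.Perm (Fin n) → W →ₗ[O] T,
      (∀ σ t, q σ (e t * (s σ : W)) = t) ∧ (∀ σ τ t, τ ≠ σ → q σ (e t * (s τ : W)) = 0) := by
  obtain ⟨he, hint, -⟩ := hW
  obtain ⟨p, h1, h2⟩ := @exists_proj _ _ _ _ _ _ (_) _ hint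
  have hmem : ∀ σ t, e t * (s σ : W) ∈ Submodule.map (LinearMap.mulRight O ((s σ : Wˣ) : W))
        (Subalgebra.toSubmodule e.range) := fun σ t => ⟨e t, ⟨t, rfl⟩, rfl⟩
  let F : (Equiv.Perm (Fin n) → T) →ₗ[O] W :=
    ∑ σ, (LinearMap.mulRight O ((s σ : Wˣ) : W)) ∘ₗ e.toLinearMap ∘ₗ LinearMap.proj σ
  have hF : ∀ f, F f = ∑ σ, e (f σ) * (s σ : W) := fun f => by
    simp [F, LinearMap.sum_apply]
  have hFs : ∀ σ t, F (Pi.single σ t) = e t * (s σ : W) := by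
    intro σ t
    rw [hF, Finset.sum_eq_single σ]
    · simp
    · intro τ _ hτ
      simp [Pi.single_eq_of_ne hτ]
    · simp
  have hinj : Function.Injective F := by
    rw [injective_iff_map_eq_zero]
    intro f hf
    funext σ
    have := congrArg (p σ) hf
    rw [hF, map_sum, Finset.sum_eq_single σ, h1 σ _ (hmem σ _), map_zero] at this
    · apply he
      rw [Pi.zero_apply, map_zero]
      exact (Units.mul_left_eq_zero _).1 this
    · intro τ _ hτ
      exact h2 σ τ hτ _ (hmem τ _)
    · simp
  have hsurj : Function.Surjective F := by
    rw [← LinearMap.range_eq_top, eq_top_iff]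
    refine le_trans (@DirectSum.IsInternal.submodule_iSup_eq_top _ _ _ (_) _ _ _ _ hint).ge ?_
    refine iSup_le fun σ => ?_
    rintro _ ⟨_, ⟨t, rfl⟩, rfl⟩
    exact ⟨_, hFs σ t⟩
  let E := LinearEquiv.ofBijective F ⟨hinj, hsurj⟩
  have hE : ∀ σ t, E.symm (e t * (s σ : W)) = Pi.single σ t := by
    intro σ t
    rw [LinearEquiv.symm_apply_eq]
    exact (hFs σ t).symm
  refine ⟨fun σ => LinearMap.proj σ ∘ₗ E.symm.toLinearMap, ?_, ?_⟩
  · intro σ t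
    simp [hE]
  · intro σ τ t h
    simp [hE, Pi.single_eq_of_ne h.symm]

end helpers

theorem stmt7 (O : Type*) [CommRing O] (G : Type*) [Group G] (n : ℕ) (hn : 1 ≤ n)
    (A : Type*) [Ring A] [Algebra O A]
    (𝒜 : G → Submodule O A) (h𝒜 : IsCrossedProduct O 𝒜)
    -- the permutation action of `Sₙ` on `A^{⊗n}`
    (Φ : Equiv.Perm (Fin n) →* ((⨂[O] _i : Fin n, A) ≃ₐ[O] (⨂[O] _i : Fin n, A)))
    (hΦ : ∀ (σ : Equiv.Perm (Fin n)) (a : Fin n → A),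
      Φ σ (tprod O a) = tprod O (fun i => a (σ.symm i)))
    -- the wreath product algebra `W = A ≀ Sₙ`
    (W : Type*) [Ring W] [Algebra O W]
    (e : (⨂[O] _i : Fin n, A) →ₐ[O] W) (s : Equiv.Perm (Fin n) →* Wˣ)
    (hW : IsWreathPresentation O e s Φ) :
    IsCrossedProduct O (wreathGrading O 𝒜 e s) ∧
    -- explicitly: `(u_{g₁} ⊗ … ⊗ u_{gₙ}) ⊗ σ` is an invertible homogeneous element
    -- of the `((g₁,…,gₙ),σ)`-component, with inverse
    -- `(u_{g_{σ(1)}}⁻¹ ⊗ … ⊗ u_{g_{σ(n)}}⁻¹) ⊗ σ⁻¹`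
    ∀ (u : G → Aˣ), (∀ g : G, ((u g : A) ∈ 𝒜 g)) →
      ∀ (g : Fin n → G) (σ : Equiv.Perm (Fin n)),
        (e (tprod O (fun i => (u (g i) : A))) * ((s σ : Wˣ) : W) ∈
          wreathGrading O 𝒜 e s ⟨g, σ⟩) ∧
        (e (tprod O (fun i => (u (g i) : A))) * ((s σ : Wˣ) : W)) *
          (e (tprod O (fun i => (((u (g (σ i)))⁻¹ : Aˣ) : A))) * ((s σ⁻¹ : Wˣ) : W)) = 1 ∧
        (e (tprod O (fun i => (((u (g (σ i)))⁻¹ : Aˣ) : A))) * ((s σ⁻¹ : Wˣ) : W)) *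
          (e (tprod O (fun i => (u (g i) : A))) * ((s σ : Wˣ) : W)) = 1 := by
  classical
  obtain ⟨⟨hone, hmul, hint⟩, hu⟩ := h𝒜
  have hrel := hW.2.2
  have hprod : ∀ (t t' : ⨂[O] _i : Fin n, A) (σ τ : Equiv.Perm (Fin n)),
      (e t * (s σ : W)) * (e t' * (s τ : W)) = e (t * Φ σ t') * (s (σ * τ) : W) := by
    intro t t' σ τ
    rw [mul_assoc, ← mul_assoc (s σ : W), hrel, map_mul e, map_mul s, Units.val_mul]
    simp only [mul_assoc]
  have hmem : ∀ (t : ⨂[O] _i : Fin n, A) (x : WreathGroup G n),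
      t ∈ tensorGrading O (fun _ : Fin n => 𝒜) x.left →
      e t * (s x.right : W) ∈ wreathGrading O 𝒜 e s x := fun t x ht => ⟨t, ht, rfl⟩
  have hexp : ∀ (u : G → Aˣ), (∀ g : G, ((u g : A) ∈ 𝒜 g)) →
      ∀ (g : Fin n → G) (σ : Equiv.Perm (Fin n)),
        (e (tprod O (fun i => (u (g i) : A))) * ((s σ : Wˣ) : W) ∈
          wreathGrading O 𝒜 e s ⟨g, σ⟩) ∧
        (e (tprod O (fun i => (u (g i) : A))) * ((s σ : Wˣ) : W)) *
          (e (tprod O (fun i => (((u (g (σ i)))⁻¹ : Aˣ) : A))) * ((s σ⁻¹ : Wˣ) : W)) = 1 ∧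
        (e (tprod O (fun i => (((u (g (σ i)))⁻¹ : Aˣ) : A))) * ((s σ⁻¹ : Wˣ) : W)) *
          (e (tprod O (fun i => (u (g i) : A))) * ((s σ : Wˣ) : W)) = 1 := by
    intro u hu g σ
    refine ⟨hmem _ ⟨g, σ⟩ (Submodule.subset_span ⟨_, fun i => hu _, rfl⟩), ?_, ?_⟩
    · rw [hprod, hΦ, PiTensorProduct.tprod_mul_tprod, mul_inv_cancel, map_one s, Units.val_one,
        mul_one]
      rw [← map_one e, PiTensorProduct.one_def]
      congr 2
      funext i
      simp
    · rw [hprod, hΦ, PiTensorProduct.tprod_mul_tprod, inv_mul_cancel, map_one s, Units.val_one,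
        mul_one]
      rw [← map_one e, PiTensorProduct.one_def]
      congr 2
      funext i
      have : (σ⁻¹ : Equiv.Perm (Fin n)).symm i = σ i := rfl
      simp [this]
  refine ⟨⟨⟨?_, ?_, ?_⟩, ?_⟩, hexp⟩
  · have := hmem 1 1 (Submodule.subset_span ⟨1, fun i => hone, PiTensorProduct.one_def⟩)
    simpa using this
  · rintro x y _ ⟨t, ht, rfl⟩ _ ⟨t', ht', rfl⟩
    have := hmem (t * Φ x.right t') (x * y)
      (tensorGrading_mul 𝒜 hmul _ _ _ _ ht (tensorGrading_perm 𝒜 Φ hΦ _ _ _ ht'))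
    rw [SemidirectProduct.mul_right, ← hprod] at this
    exact this
  · obtain ⟨p, h1, h2⟩ := @tensorGrading_proj O G A _ _ n _ _ 𝒜 (_) hint
    obtain ⟨q, q1, q2⟩ := wreath_coord e s Φ hW
    refine @internal_of_proj O W (⨂[O] _i : Fin n, A) (WreathGroup G n) _ _ _ _ _ (_)
      (wreathGrading O 𝒜 e s) (fun x => p x.left ∘ₗ q x.right) ?_ ?_ ?_
    · rintro x _ ⟨t, ht, rfl⟩ h0
      have h0' : p x.left (q x.right (e t * (s x.right : W))) = 0 := h0
      rw [q1, h1 _ _ ht] at h0'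
      simp [h0']
    · rintro x y hxy _ ⟨t, ht, rfl⟩
      change p x.left (q x.right (e t * (s y.right : W))) = 0
      by_cases hr : y.right = x.right
      · rw [hr, q1]
        refine h2 _ _ (fun hl => hxy (SemidirectProduct.ext hl hr)) _ ht
      · rw [q2 _ _ _ hr, map_zero]
    · have hle : ∀ σ : Equiv.Perm (Fin n),
          Submodule.map (LinearMap.mulRight O ((s σ : Wˣ) : W))
            (Subalgebra.toSubmodule e.range) ≤ ⨆ x, wreathGrading O 𝒜 e s x := by
        rintro σ _ ⟨_, ⟨t, rfl⟩, rfl⟩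
        have ht := @tensorGrading_mem_iSup O G A _ _ n _ _ 𝒜 (_) hint t
        have hle' : (⨆ g : Fin n → G, tensorGrading O (fun _ : Fin n => 𝒜) g) ≤
            (⨆ x, wreathGrading O 𝒜 e s x).comap
              ((LinearMap.mulRight O ((s σ : Wˣ) : W)).comp e.toLinearMap) := by
          refine iSup_le fun g t ht => ?_
          exact Submodule.mem_iSup_of_mem (⟨g, σ⟩ : WreathGroup G n) (hmem t ⟨g, σ⟩ ht)
        exact hle' ht
      intro w
      refine iSup_le hle ?_
      rw [@DirectSum.IsInternal.submodule_iSup_eq_top _ _ _ (_) _ _ _ _ hW.2.1]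
      trivial
  · intro x
    choose u hu using hu
    obtain ⟨a, b, c⟩ := hexp u hu x.left x.right
    exact ⟨⟨_, _, b, c⟩, a⟩
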